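/- Let k ≥ 4 be a fixed integer and let α, β, γ, δ ∈ {0,1,…,k} with α, δ ∈ {0,k}. There exists a k-L(2,1)-labelling L of the gadget G_k with L(u) = α, L(a_u) = β, L(a_v) = γ, L(v) = δ if and only if the following conditions hold: if (α,δ) = (0,0) then (β,γ) ∈ {(2,k), (k,2), (k−2,k), (k,k−2)}; if (α,δ) = (k,k) then (β,γ) ∈ {(2,0), (0,2), (k−2,0), (0,k−2)}; if (α,δ) = (k,0) then (β,γ) = (1,k−1); if (α,δ) = (0,k) then (β,γ) = (k−1,1). -/

import Mathlib

/-- For an integer `k`, a `k`-L(2,1)-labelling of a graph `G` is a map from the vertices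
to `{0,1,…,k}` such that labels of adjacent vertices differ by at least `2` and vertices
at distance exactly `2` get distinct labels. -/
def IsL21Labelling {V : Type*} (G : SimpleGraph V) (k : ℕ) (L : V → ℕ) : Prop :=
  (∀ v, L v ≤ k) ∧
  (∀ x y, G.Adj x y → 2 ≤ |(L x : ℤ) - (L y : ℤ)|) ∧
  (∀ x y, G.dist x y = 2 → L x ≠ L y)

/-- The vertices of the gadget `G₅`. -/
inductive G5V | u | au | av | v | bu | bv | c | d | e1 | e2 | e3 | f | g1 | g2
deriving DecidableEq

open G5V in
/-- The gadget `G₅`. -/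
def G5 : SimpleGraph G5V :=
  SimpleGraph.fromRel (fun x y => (x, y) ∈
    [(u,au),(au,av),(av,v),(au,bu),(av,bv),(bu,c),(bv,c),(c,d),
     (d,e1),(d,e2),(d,e3),(e1,f),(e2,f),(f,g1),(f,g2)])

/-- The vertices of the graph `H'` for a given `k`:
`c, d, e, f₁, …, f_{k-3}, g, h, i`. -/
inductive HpV (k : ℕ) | c | d | e | f (j : Fin (k - 3)) | g | h | i
deriving DecidableEq

/-- The adjacency generating relation of `H'`: edges `cd`, `de`, `gh`, `gi`,
and `d fⱼ`, `g fⱼ` for every `j`. -/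
def HpAdj (k : ℕ) : HpV k → HpV k → Prop := fun x y =>
  (x = HpV.c ∧ y = HpV.d) ∨ (x = HpV.d ∧ y = HpV.e) ∨
  (x = HpV.g ∧ y = HpV.h) ∨ (x = HpV.g ∧ y = HpV.i) ∨
  (∃ j, (x = HpV.d ∧ y = HpV.f j) ∨ (x = HpV.g ∧ y = HpV.f j))

/-- The vertices of the gadget `G_k` for `k ≠ 5`: the path `u, a_u, a_v, v`,
the vertices `b₁, …, b_{k-5}`, and for each `i` two copies (indexed by `Bool`)
of the graph `H'`.  (For `k = 4` the sets of `b`- and `H'`-vertices are empty and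
this is just the path `u, a_u, a_v, v`, i.e. the gadget `G₄`.) -/
inductive GkV (k : ℕ)
| u | au | av | v
| b (i : Fin (k - 5))
| hp (i : Fin (k - 5)) (s : Bool) (x : HpV k)

/-- The adjacency generating relation of the gadget `G_k` for `k ≠ 5`. -/
def GkAdj (k : ℕ) : GkV k → GkV k → Prop := fun x y =>
  (x = GkV.u ∧ y = GkV.au) ∨ (x = GkV.au ∧ y = GkV.av) ∨ (x = GkV.av ∧ y = GkV.v) ∨
  (∃ i, (x = GkV.au ∧ y = GkV.b i) ∨ (x = GkV.av ∧ y = GkV.b i)) ∨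
  (∃ i s, x = GkV.b i ∧ y = GkV.hp i s HpV.c) ∨
  (∃ i s x' y', x = GkV.hp i s x' ∧ y = GkV.hp i s y' ∧ HpAdj k x' y')

/-- The gadget `G_k` for `k ≠ 5`. -/
def Gk (k : ℕ) : SimpleGraph (GkV k) := SimpleGraph.fromRel (GkAdj k)

/-- A graph together with four distinguished vertices `u, a_u, a_v, v`. -/
structure GadgetData where
  V : Type
  G : SimpleGraph V
  u : V
  au : V
  av : V
  v : V

/-- The gadget `G_k` for `k ≥ 4`, with its distinguished vertices: for `k = 5` it is
the special gadget `G₅`, for `k = 4` and `k ≥ 6` it is the gadget `G_k` above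
(for `k = 4` this is just the path `u, a_u, a_v, v`, i.e. `G₄`). -/
def gadget (k : ℕ) : GadgetData :=
  if k = 5 then ⟨G5V, G5, G5V.u, G5V.au, G5V.av, G5V.v⟩
  else ⟨GkV k, Gk k, GkV.u, GkV.au, GkV.av, GkV.v⟩

theorem sep_iff (a b : ℕ) : 2 ≤ |(a : ℤ) - (b : ℤ)| ↔ (a + 2 ≤ b ∨ b + 2 ≤ a) := by
  rw [le_abs]; omega

theorem l21_iff {V : Type*} (G : SimpleGraph V) (k : ℕ) (L : V → ℕ) :
    IsL21Labelling G k L ↔ (∀ v, L v ≤ k) ∧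
      (∀ x y, G.Adj x y → (L x + 2 ≤ L y ∨ L y + 2 ≤ L x)) ∧
      (∀ z x y, G.Adj z x → G.Adj z y → x ≠ y → L x ≠ L y) := by
  unfold IsL21Labelling
  simp only [sep_iff]
  refine and_congr_right fun _ => and_congr_right fun h2 => ⟨fun h z x y hx hy hne => ?_,
    fun h x y hd => ?_⟩
  · by_cases ha : G.Adj x y
    · have := h2 x y ha
      omega
    · apply h
      have hle : G.dist x y ≤ 2 :=
        SimpleGraph.dist_le (SimpleGraph.Walk.cons hx.symm (SimpleGraph.Walk.cons hy .nil))
      have hr : G.Reachable x y := ⟨SimpleGraph.Walk.cons hx.symm (SimpleGraph.Walk.cons hy .nil)⟩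
      have h0 : G.dist x y ≠ 0 := by
        intro h0
        exact hne (hr.dist_eq_zero_iff.1 h0)
      have h1 : G.dist x y ≠ 1 := fun h1 => ha (SimpleGraph.dist_eq_one_iff_adj.1 h1)
      omega
  · have hr : G.Reachable x y := by
      by_contra hc
      have := SimpleGraph.dist_eq_zero_of_not_reachable hc
      omega
    obtain ⟨p, hp⟩ := hr.exists_walk_length_eq_dist
    rw [hd] at hp
    match p, hp with
    | .cons (v := z) hxz (.cons hzy .nil), _ =>
      refine h z x _ hxz.symm hzy ?_
      rintro rfl
      simp at hd

/-! ### The gadget `G₅` -/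

instance fintypeG5V : Fintype G5V :=
  ⟨⟨(([.u, .au, .av, .v, .bu, .bv, .c, .d, .e1, .e2, .e3, .f, .g1, .g2] : List G5V) :
      Multiset G5V), by decide⟩,
    by intro x; cases x <;> decide⟩

instance decG5Adj : DecidableRel G5.Adj := fun _ _ =>
  decidable_of_iff _ (SimpleGraph.fromRel_adj _ _ _).symm

def lab5 (u au av v bu bv c d e1 e2 e3 f g1 g2 : ℕ) : G5V → ℕ
  | .u => u | .au => au | .av => av | .v => v | .bu => bu | .bv => bv | .c => c | .d => d
  | .e1 => e1 | .e2 => e2 | .e3 => e3 | .f => f | .g1 => g1 | .g2 => g2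

theorem lab5_ok (u au av v bu bv c d e1 e2 e3 f g1 g2 : ℕ)
    (h : (∀ x, lab5 u au av v bu bv c d e1 e2 e3 f g1 g2 x ≤ 5) ∧
      (∀ x y, G5.Adj x y →
        (lab5 u au av v bu bv c d e1 e2 e3 f g1 g2 x + 2 ≤
            lab5 u au av v bu bv c d e1 e2 e3 f g1 g2 y ∨
          lab5 u au av v bu bv c d e1 e2 e3 f g1 g2 y + 2 ≤
            lab5 u au av v bu bv c d e1 e2 e3 f g1 g2 x)) ∧
      (∀ z x, G5.Adj z x → ∀ y, G5.Adj z y → x ≠ y →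
        lab5 u au av v bu bv c d e1 e2 e3 f g1 g2 x ≠
          lab5 u au av v bu bv c d e1 e2 e3 f g1 g2 y)) :
    ∃ L : G5V → ℕ, IsL21Labelling G5 5 L ∧ L .u = u ∧ L .au = au ∧ L .av = av ∧ L .v = v :=
  ⟨lab5 u au av v bu bv c d e1 e2 e3 f g1 g2,
    (l21_iff _ _ _).2 ⟨h.1, h.2.1, fun z x y hx hy => h.2.2 z x hx y hy⟩, rfl, rfl, rfl, rfl⟩

theorem end5 (x p q r s : ℕ) (hp : p ≤ 5) (hq : q ≤ 5) (hr : r ≤ 5) (hs : s ≤ 5) (hx : x ≤ 5)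
    (h1 : x + 2 ≤ p ∨ p + 2 ≤ x) (h2 : x + 2 ≤ q ∨ q + 2 ≤ x)
    (h3 : x + 2 ≤ r ∨ r + 2 ≤ x) (h4 : x + 2 ≤ s ∨ s + 2 ≤ x)
    (h12 : p ≠ q) (h13 : p ≠ r) (h14 : p ≠ s) (h23 : q ≠ r) (h24 : q ≠ s) (h34 : r ≠ s) :
    x = 0 ∨ x = 5 := by
  interval_cases x <;> omega

theorem g5_forward (L : G5V → ℕ) (hL : IsL21Labelling G5 5 L) :
    ∃ bu bv c d : ℕ, bu ≤ 5 ∧ bv ≤ 5 ∧ bu ≠ bv ∧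
      ((d = 0 ∧ (c = 4 ∨ c = 5)) ∨ (d = 5 ∧ (c = 0 ∨ c = 1))) ∧
      bu ≠ d ∧ bv ≠ d ∧ (bu + 2 ≤ c ∨ c + 2 ≤ bu) ∧ (bv + 2 ≤ c ∨ c + 2 ≤ bv) ∧
      (bu + 2 ≤ L .au ∨ L .au + 2 ≤ bu) ∧ (bv + 2 ≤ L .av ∨ L .av + 2 ≤ bv) ∧
      c ≠ L .au ∧ c ≠ L .av ∧ bu ≠ L .av ∧ bv ≠ L .au ∧ bu ≠ L .u ∧ bv ≠ L .v ∧
      (L .u + 2 ≤ L .au ∨ L .au + 2 ≤ L .u) ∧ (L .v + 2 ≤ L .av ∨ L .av + 2 ≤ L .v) ∧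
      (L .au + 2 ≤ L .av ∨ L .av + 2 ≤ L .au) ∧ L .u ≠ L .av ∧ L .v ≠ L .au := by
  obtain ⟨hb, ha, hd⟩ := (l21_iff _ _ _).1 hL
  have D := end5 (L .d) (L .c) (L .e1) (L .e2) (L .e3) (hb _) (hb _) (hb _) (hb _) (hb _)
    (ha _ _ (by decide)) (ha _ _ (by decide)) (ha _ _ (by decide)) (ha _ _ (by decide))
    (hd .d _ _ (by decide) (by decide) (by decide)) (hd .d _ _ (by decide) (by decide) (by decide))
    (hd .d _ _ (by decide) (by decide) (by decide)) (hd .d _ _ (by decide) (by decide) (by decide))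
    (hd .d _ _ (by decide) (by decide) (by decide)) (hd .d _ _ (by decide) (by decide) (by decide))
  have F := end5 (L .f) (L .e1) (L .e2) (L .g1) (L .g2) (hb _) (hb _) (hb _) (hb _) (hb _)
    (ha _ _ (by decide)) (ha _ _ (by decide)) (ha _ _ (by decide)) (ha _ _ (by decide))
    (hd .f _ _ (by decide) (by decide) (by decide)) (hd .f _ _ (by decide) (by decide) (by decide))
    (hd .f _ _ (by decide) (by decide) (by decide)) (hd .f _ _ (by decide) (by decide) (by decide))
    (hd .f _ _ (by decide) (by decide) (by decide)) (hd .f _ _ (by decide) (by decide) (by decide))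
  have DF := hd .e1 .d .f (by decide) (by decide) (by decide)
  have h1 := ha .d .c (by decide)
  have h2 := ha .d .e1 (by decide)
  have h3 := ha .d .e2 (by decide)
  have h4 := ha .f .e1 (by decide)
  have h5 := ha .f .e2 (by decide)
  have h6 := hd .d .c .e1 (by decide) (by decide) (by decide)
  have h7 := hd .d .c .e2 (by decide) (by decide) (by decide)
  have h8 := hd .d .e1 .e2 (by decide) (by decide) (by decide)
  have b1 := hb .c
  have b2 := hb .e1
  have b3 := hb .e2
  refine ⟨L .bu, L .bv, L .c, L .d, hb _, hb _, hd .c _ _ (by decide) (by decide) (by decide), ?_,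
    hd .c _ _ (by decide) (by decide) (by decide), hd .c _ _ (by decide) (by decide) (by decide),
    ha _ _ (by decide), ha _ _ (by decide), ha _ _ (by decide), ha _ _ (by decide),
    hd .bu _ _ (by decide) (by decide) (by decide), hd .bv _ _ (by decide) (by decide) (by decide),
    hd .au _ _ (by decide) (by decide) (by decide), hd .av _ _ (by decide) (by decide) (by decide),
    hd .au _ _ (by decide) (by decide) (by decide), hd .av _ _ (by decide) (by decide) (by decide),
    ha _ _ (by decide), ha _ _ (by decide), ha _ _ (by decide),
    hd .au _ _ (by decide) (by decide) (by decide), hd .av _ _ (by decide) (by decide) (by decide)⟩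
  omega

theorem g5_iff (α β γ δ : ℕ)
    (hα : α = 0 ∨ α = 5) (hδ : δ = 0 ∨ δ = 5) (hβ : β ≤ 5) (hγ : γ ≤ 5) :
    (∃ L : G5V → ℕ, IsL21Labelling G5 5 L ∧ L .u = α ∧ L .au = β ∧ L .av = γ ∧ L .v = δ) ↔
    ((α = 0 ∧ δ = 0 → β = 2 ∧ γ = 5 ∨ β = 5 ∧ γ = 2 ∨ β = 3 ∧ γ = 5 ∨ β = 5 ∧ γ = 3) ∧
     (α = 5 ∧ δ = 5 → β = 2 ∧ γ = 0 ∨ β = 0 ∧ γ = 2 ∨ β = 3 ∧ γ = 0 ∨ β = 0 ∧ γ = 3) ∧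
     (α = 5 ∧ δ = 0 → β = 1 ∧ γ = 4) ∧
     (α = 0 ∧ δ = 5 → β = 4 ∧ γ = 1)) := by
  constructor
  · rintro ⟨L, hL, hu, hau, hav, hv⟩
    obtain ⟨bu, bv, c, d, h⟩ := g5_forward L hL
    rw [hu, hau, hav, hv] at h
    rcases hα with rfl | rfl <;> rcases hδ with rfl | rfl <;> interval_cases β <;>
      interval_cases γ <;> first | decide | (exfalso; omega)
  · rintro ⟨h1, h2, h3, h4⟩
    rcases hα with rfl | rfl <;> rcases hδ with rfl | rfl
    · rcases h1 ⟨rfl, rfl⟩ with ⟨rfl, rfl⟩ | ⟨rfl, rfl⟩ | ⟨rfl, rfl⟩ | ⟨rfl, rfl⟩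
      · exact lab5_ok 0 2 5 0 4 3 0 5 2 3 1 0 4 5 (by decide +kernel)
      · exact lab5_ok 0 5 2 0 3 4 0 5 2 3 1 0 4 5 (by decide +kernel)
      · exact lab5_ok 0 3 5 0 1 2 4 0 2 3 5 5 0 1 (by decide +kernel)
      · exact lab5_ok 0 5 3 0 2 1 4 0 2 3 5 5 0 1 (by decide +kernel)
    · obtain ⟨rfl, rfl⟩ := h4 ⟨rfl, rfl⟩
      exact lab5_ok 0 4 1 5 2 3 0 5 2 3 1 0 4 5 (by decide +kernel)
    · obtain ⟨rfl, rfl⟩ := h3 ⟨rfl, rfl⟩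
      exact lab5_ok 5 1 4 0 3 2 0 5 2 3 1 0 4 5 (by decide +kernel)
    · rcases h2 ⟨rfl, rfl⟩ with ⟨rfl, rfl⟩ | ⟨rfl, rfl⟩ | ⟨rfl, rfl⟩ | ⟨rfl, rfl⟩
      · exact lab5_ok 5 2 0 5 4 3 1 5 2 3 0 0 4 5 (by decide +kernel)
      · exact lab5_ok 5 0 2 5 3 4 1 5 2 3 0 0 4 5 (by decide +kernel)
      · exact lab5_ok 5 3 0 5 1 2 4 0 2 3 5 5 0 1 (by decide +kernel)
      · exact lab5_ok 5 0 3 5 2 1 4 0 2 3 5 5 0 1 (by decide +kernel)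

/-! ### The gadgets `G_k`, `k ≠ 5`: constructing labellings -/

section nb
variable {k : ℕ} {x : GkV k}

theorem nb_u (h : (Gk k).Adj .u x) : x = .au := by
  simp [Gk, GkAdj] at h; grind
theorem nb_v (h : (Gk k).Adj .v x) : x = .av := by
  simp [Gk, GkAdj] at h; grind
theorem nb_au (h : (Gk k).Adj .au x) : x = .u ∨ x = .av ∨ ∃ i, x = .b i := by
  simp [Gk, GkAdj] at h; grind
theorem nb_av (h : (Gk k).Adj .av x) : x = .v ∨ x = .au ∨ ∃ i, x = .b i := by
  simp [Gk, GkAdj] at h; grind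
theorem nb_b {i} (h : (Gk k).Adj (.b i) x) : x = .au ∨ x = .av ∨ ∃ s, x = .hp i s .c := by
  simp [Gk, GkAdj] at h; grind
theorem nb_c {i s} (h : (Gk k).Adj (.hp i s .c) x) : x = .b i ∨ x = .hp i s .d := by
  simp [Gk, GkAdj, HpAdj] at h; grind
theorem nb_d {i s} (h : (Gk k).Adj (.hp i s .d) x) :
    x = .hp i s .c ∨ x = .hp i s .e ∨ ∃ j, x = .hp i s (.f j) := by
  simp [Gk, GkAdj, HpAdj] at h; grind
theorem nb_e {i s} (h : (Gk k).Adj (.hp i s .e) x) : x = .hp i s .d := by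
  simp [Gk, GkAdj, HpAdj] at h; grind
theorem nb_f {i s j} (h : (Gk k).Adj (.hp i s (.f j)) x) : x = .hp i s .d ∨ x = .hp i s .g := by
  simp [Gk, GkAdj, HpAdj] at h; grind
theorem nb_g {i s} (h : (Gk k).Adj (.hp i s .g) x) :
    x = .hp i s .h ∨ x = .hp i s .i ∨ ∃ j, x = .hp i s (.f j) := by
  simp [Gk, GkAdj, HpAdj] at h; grind
theorem nb_h {i s} (h : (Gk k).Adj (.hp i s .h) x) : x = .hp i s .g := by
  simp [Gk, GkAdj, HpAdj] at h; grind
theorem nb_i {i s} (h : (Gk k).Adj (.hp i s .i) x) : x = .hp i s .g := by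
  simp [Gk, GkAdj, HpAdj] at h; grind
end nb

def hplab (k c : ℕ) : HpV k → ℕ
  | .c => c
  | .d => if c ≤ 1 then k else 0
  | .e => if c = 0 then 1 else if c = 1 then 0 else if c = k then k - 1 else k
  | .f j => j + 2
  | .g => if c ≤ 1 then 0 else k
  | .h => if c ≤ 1 then k else 0
  | .i => if c ≤ 1 then k - 1 else 1

def labk (k α β γ δ o c1 c2 : ℕ) : GkV k → ℕ
  | .u => α
  | .au => β
  | .av => γ
  | .v => δ
  | .b i => i + o
  | .hp _ s x => hplab k (if s then c1 else c2) x

theorem labk_ok (k α β γ δ o c1 c2 : ℕ) (hk : 4 ≤ k)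
    (hα : α ≤ k) (hβ : β ≤ k) (hγ : γ ≤ k) (hδ : δ ≤ k)
    (h1 : α + 2 ≤ β ∨ β + 2 ≤ α) (h2 : γ + 2 ≤ β ∨ β + 2 ≤ γ) (h3 : γ + 2 ≤ δ ∨ δ + 2 ≤ γ)
    (h4 : α ≠ γ) (h5 : β ≠ δ)
    (hc1 : c1 = 0 ∨ c1 = 1 ∨ c1 = k - 1 ∨ c1 = k) (hc2 : c2 = 0 ∨ c2 = 1 ∨ c2 = k - 1 ∨ c2 = k)
    (hcc : c1 ≠ c2) (hβ1 : c1 ≠ β) (hβ2 : c2 ≠ β) (hγ1 : c1 ≠ γ) (hγ2 : c2 ≠ γ)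
    (hb : ∀ i, i < k - 5 → 1 ≤ i + o ∧ i + o + 1 ≤ k ∧ i + o ≠ α ∧ i + o ≠ δ ∧
      (i + o + 2 ≤ β ∨ β + 2 ≤ i + o) ∧ (i + o + 2 ≤ γ ∨ γ + 2 ≤ i + o) ∧
      (i + o + 2 ≤ c1 ∨ c1 + 2 ≤ i + o) ∧ (i + o + 2 ≤ c2 ∨ c2 + 2 ≤ i + o)) :
    ∃ L : GkV k → ℕ, IsL21Labelling (Gk k) k L ∧ L .u = α ∧ L .au = β ∧ L .av = γ ∧ L .v = δ := by
  refine ⟨labk k α β γ δ o c1 c2, (l21_iff _ _ _).2 ⟨?_, ?_, ?_⟩, rfl, rfl, rfl, rfl⟩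
  · rintro (_ | _ | _ | _ | i | ⟨i, s, (_ | _ | _ | j | _ | _ | _)⟩)
    all_goals simp only [labk, hplab]
    all_goals try have := hb i i.2
    all_goals try have := j.2
    all_goals try cases s
    all_goals try simp only [Bool.false_eq_true, if_true, if_false]
    all_goals first | omega | (split_ifs <;> omega)
  · rintro (_ | _ | _ | _ | i | ⟨i, s, (_ | _ | _ | j | _ | _ | _)⟩) y hy
    · obtain rfl := nb_u hy
      simp only [labk]; omega
    · obtain rfl | rfl | ⟨i, rfl⟩ := nb_au hy
      · simp only [labk]; omega
      · simp only [labk]; omega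
      · have := hb i i.2
        simp only [labk]; omega
    · obtain rfl | rfl | ⟨i, rfl⟩ := nb_av hy
      · simp only [labk]; omega
      · simp only [labk]; omega
      · have := hb i i.2
        simp only [labk]; omega
    · obtain rfl := nb_v hy
      simp only [labk]; omega
    · have := hb i i.2
      obtain rfl | rfl | ⟨s, rfl⟩ := nb_b hy
      · simp only [labk]; omega
      · simp only [labk]; omega
      · cases s <;> simp only [labk, hplab, Bool.false_eq_true, if_true, if_false] <;> omega
    · have := hb i i.2
      obtain rfl | rfl := nb_c hy
      · cases s <;> simp only [labk, hplab, Bool.false_eq_true, if_true, if_false] <;> omega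
      · cases s <;> simp only [labk, hplab, Bool.false_eq_true, if_true, if_false] <;>
          split_ifs <;> omega
    · obtain rfl | rfl | ⟨j, rfl⟩ := nb_d hy
      · cases s <;> simp only [labk, hplab, Bool.false_eq_true, if_true, if_false] <;>
          split_ifs <;> omega
      · cases s <;> simp only [labk, hplab, Bool.false_eq_true, if_true, if_false] <;>
          split_ifs <;> omega
      · have := j.2
        cases s <;> simp only [labk, hplab, Bool.false_eq_true, if_true, if_false] <;>
          split_ifs <;> omega
    · obtain rfl := nb_e hy
      cases s <;> simp only [labk, hplab, Bool.false_eq_true, if_true, if_false] <;>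
        split_ifs <;> omega
    · have := j.2
      obtain rfl | rfl := nb_f hy <;>
        cases s <;> simp only [labk, hplab, Bool.false_eq_true, if_true, if_false] <;>
          split_ifs <;> omega
    · obtain rfl | rfl | ⟨j, rfl⟩ := nb_g hy
      · cases s <;> simp only [labk, hplab, Bool.false_eq_true, if_true, if_false] <;>
          split_ifs <;> omega
      · cases s <;> simp only [labk, hplab, Bool.false_eq_true, if_true, if_false] <;>
          split_ifs <;> omega
      · have := j.2
        cases s <;> simp only [labk, hplab, Bool.false_eq_true, if_true, if_false] <;>
          split_ifs <;> omega
    · obtain rfl := nb_h hy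
      cases s <;> simp only [labk, hplab, Bool.false_eq_true, if_true, if_false] <;>
        split_ifs <;> omega
    · obtain rfl := nb_i hy
      cases s <;> simp only [labk, hplab, Bool.false_eq_true, if_true, if_false] <;>
        split_ifs <;> omega
  · rintro (_ | _ | _ | _ | i | ⟨i, s, (_ | _ | _ | j | _ | _ | _)⟩) x y hx hy hne
    · exact absurd ((nb_u hx).trans (nb_u hy).symm) hne
    · obtain rfl | rfl | ⟨i, rfl⟩ := nb_au hx <;> obtain rfl | rfl | ⟨j, rfl⟩ := nb_au hy
      all_goals try have hi := hb i i.2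
      all_goals try have hj := hb j j.2
      all_goals simp only [labk]
      all_goals first | omega | skip
      · exact absurd rfl hne
      · exact absurd rfl hne
      · intro h
        exact hne (by congr 1; ext; omega)
    · obtain rfl | rfl | ⟨i, rfl⟩ := nb_av hx <;> obtain rfl | rfl | ⟨j, rfl⟩ := nb_av hy
      all_goals try have hi := hb i i.2
      all_goals try have hj := hb j j.2
      all_goals simp only [labk]
      all_goals first | omega | skip
      · exact absurd rfl hne
      · exact absurd rfl hne
      · intro h
        exact hne (by congr 1; ext; omega)
    · exact absurd ((nb_v hx).trans (nb_v hy).symm) hne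
    · obtain rfl | rfl | ⟨s, rfl⟩ := nb_b hx <;> obtain rfl | rfl | ⟨t, rfl⟩ := nb_b hy
      all_goals try cases s
      all_goals try cases t
      all_goals first
        | exact absurd rfl hne
        | (simp only [labk, hplab, Bool.false_eq_true, if_true, if_false]; omega)
    · have := hb i i.2
      obtain rfl | rfl := nb_c hx <;> obtain rfl | rfl := nb_c hy
      all_goals first
        | exact absurd rfl hne
        | (cases s <;> simp only [labk, hplab, Bool.false_eq_true, if_true, if_false] <;>
            split_ifs <;> omega)
    · obtain rfl | rfl | ⟨j, rfl⟩ := nb_d hx <;> obtain rfl | rfl | ⟨jt, rfl⟩ := nb_d hy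
      all_goals try have hj := j.2
      all_goals try have hjt := jt.2
      all_goals first
        | exact absurd rfl hne
        | (cases s <;> simp only [labk, hplab, Bool.false_eq_true, if_true, if_false] <;>
            split_ifs <;> omega)
        | (cases s <;> simp only [labk, hplab, Bool.false_eq_true, if_true, if_false] <;> omega)
        | (simp only [labk, hplab]
           intro h
           exact hne (by congr 2; ext; omega))
    · exact absurd ((nb_e hx).trans (nb_e hy).symm) hne
    · obtain rfl | rfl := nb_f hx <;> obtain rfl | rfl := nb_f hy
      all_goals first
        | exact absurd rfl hne
        | (cases s <;> simp only [labk, hplab, Bool.false_eq_true, if_true, if_false] <;>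
            split_ifs <;> omega)
    · obtain rfl | rfl | ⟨j, rfl⟩ := nb_g hx <;> obtain rfl | rfl | ⟨jt, rfl⟩ := nb_g hy
      all_goals try have hj := j.2
      all_goals try have hjt := jt.2
      all_goals first
        | exact absurd rfl hne
        | (cases s <;> simp only [labk, hplab, Bool.false_eq_true, if_true, if_false] <;>
            split_ifs <;> omega)
        | (simp only [labk, hplab]
           intro h
           exact hne (by congr 2; ext; omega))
    · exact absurd ((nb_h hx).trans (nb_h hy).symm) hne
    · exact absurd ((nb_i hx).trans (nb_i hy).symm) hne

/-! ### The gadgets `G_k`, `k ≥ 6`: constraints on labellings -/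

theorem pigeon (m n : ℕ) (F : Fin m → ℕ) (hF : Function.Injective F) (S : Finset ℕ)
    (hS : S.card = n) (hm : n < m) (h : ∀ j, F j ∈ S) : False := by
  have := Finset.card_le_card_of_injOn (s := Finset.univ) (t := S) F (fun j _ => h j) hF.injOn
  simp at this
  omega

theorem end_label (k x p q : ℕ) (hk : 4 ≤ k) (F : Fin (k - 3) → ℕ) (hF : Function.Injective F)
    (hFk : ∀ j, F j ≤ k) (hx : x ≤ k) (hp : p ≤ k) (hq : q ≤ k) (hpq : p ≠ q)
    (hFp : ∀ j, F j ≠ p) (hFq : ∀ j, F j ≠ q)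
    (hFx : ∀ j, x + 2 ≤ F j ∨ F j + 2 ≤ x) (hpx : x + 2 ≤ p ∨ p + 2 ≤ x)
    (hqx : x + 2 ≤ q ∨ q + 2 ≤ x) : x = 0 ∨ x = k := by
  by_contra hc
  push Not at hc
  have hT : ({x - 1, x, x + 1, p, q} : Finset ℕ).card = 5 := by
    repeat rw [Finset.card_insert_of_notMem (by simp; omega)]
    simp
  have hsub : ({x - 1, x, x + 1, p, q} : Finset ℕ) ⊆ Finset.range (k + 1) := by
    intro t ht
    simp at ht ⊢
    omega
  refine pigeon (k - 3) (k - 4) F hF (Finset.range (k + 1) \ {x - 1, x, x + 1, p, q}) ?_ (by omega)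
    fun j => ?_
  · rw [Finset.card_sdiff_of_subset hsub, hT]
    simp
  · have := hFk j
    have := hFp j
    have := hFq j
    have := hFx j
    simp
    omega

theorem c_label (k c e d g h i : ℕ) (hk : 6 ≤ k) (F : Fin (k - 3) → ℕ) (hF : Function.Injective F)
    (hFk : ∀ j, F j ≤ k) (hc : c ≤ k) (he : e ≤ k) (hd : d ≤ k) (hg : g ≤ k) (hh : h ≤ k)
    (hi : i ≤ k) (hce : c ≠ e) (hhi : h ≠ i) (hdg : d ≠ g)
    (hFc : ∀ j, F j ≠ c) (hFe : ∀ j, F j ≠ e) (hFh : ∀ j, F j ≠ h) (hFi : ∀ j, F j ≠ i)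
    (hFd : ∀ j, d + 2 ≤ F j ∨ F j + 2 ≤ d) (hFg : ∀ j, g + 2 ≤ F j ∨ F j + 2 ≤ g)
    (hcd : d + 2 ≤ c ∨ c + 2 ≤ d) (hed : d + 2 ≤ e ∨ e + 2 ≤ d)
    (hhg : g + 2 ≤ h ∨ h + 2 ≤ g) (hig : g + 2 ≤ i ∨ i + 2 ≤ g) :
    (d = 0 ∧ (c = k - 1 ∨ c = k)) ∨ (d = k ∧ (c = 0 ∨ c = 1)) := by
  have D := end_label k d c e (by omega) F hF hFk hd hc he hce hFc hFe hFd hcd hed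
  have G := end_label k g h i (by omega) F hF hFk hg hh hi hhi hFh hFi hFg hhg hig
  by_contra hcon
  have hcm : c ∈ Finset.Icc 2 (k - 2) := by
    simp
    omega
  refine pigeon (k - 3) (k - 4) F hF ((Finset.Icc 2 (k - 2)).erase c) ?_ (by omega) fun j => ?_
  · rw [Finset.card_erase_of_mem hcm]
    simp
    omega
  · have := hFk j
    have := hFc j
    have := hFd j
    have := hFg j
    simp
    omega

theorem five_out (k : ℕ) (hk : 6 ≤ k) (B : Fin (k - 5) → ℕ) (hB : Function.Injective B)
    (hB1 : ∀ i, 1 ≤ B i ∧ B i ≤ k - 1) (t1 t2 t3 t4 t5 : ℕ)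
    (h1 : 1 ≤ t1) (h12 : t1 < t2) (h23 : t2 < t3) (h34 : t3 < t4) (h45 : t4 < t5) (h5 : t5 ≤ k - 1)
    (h : ∀ i, B i ≠ t1 ∧ B i ≠ t2 ∧ B i ≠ t3 ∧ B i ≠ t4 ∧ B i ≠ t5) : False := by
  have hT : ({t1, t2, t3, t4, t5} : Finset ℕ).card = 5 := by
    repeat rw [Finset.card_insert_of_notMem (by simp; omega)]
    simp
  have hsub : ({t1, t2, t3, t4, t5} : Finset ℕ) ⊆ Finset.Icc 1 (k - 1) := by
    intro t ht
    simp at ht ⊢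
    omega
  refine pigeon (k - 5) (k - 6) B hB (Finset.Icc 1 (k - 1) \ {t1, t2, t3, t4, t5}) ?_ (by omega)
    fun j => ?_
  · rw [Finset.card_sdiff_of_subset hsub, hT]
    simp
    omega
  · have := hB1 j
    have := h j
    simp
    omega

theorem gk_adj_d {k : ℕ} (i : Fin (k - 5)) (s : Bool) {x y : HpV k} (hne : x ≠ y)
    (h : HpAdj k x y) : (Gk k).Adj (.hp i s x) (.hp i s y) := by
  simp [Gk, GkAdj, hne, h]

theorem gk_c_label (k : ℕ) (hk : 6 ≤ k) (L : GkV k → ℕ) (hL : IsL21Labelling (Gk k) k L)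
    (i : Fin (k - 5)) (s : Bool) :
    (L (.hp i s .d) = 0 ∧ (L (.hp i s .c) = k - 1 ∨ L (.hp i s .c) = k)) ∨
      (L (.hp i s .d) = k ∧ (L (.hp i s .c) = 0 ∨ L (.hp i s .c) = 1)) := by
  obtain ⟨hb, ha, hd⟩ := (l21_iff _ _ _).1 hL
  have adc : (Gk k).Adj (.hp i s .d) (.hp i s .c) :=
    (gk_adj_d i s (by simp) (by simp [HpAdj])).symm
  have ade : (Gk k).Adj (.hp i s .d) (.hp i s .e) := gk_adj_d i s (by simp) (by simp [HpAdj])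
  have agh : (Gk k).Adj (.hp i s .g) (.hp i s .h) := gk_adj_d i s (by simp) (by simp [HpAdj])
  have agi : (Gk k).Adj (.hp i s .g) (.hp i s .i) := gk_adj_d i s (by simp) (by simp [HpAdj])
  have adf : ∀ j, (Gk k).Adj (.hp i s .d) (.hp i s (.f j)) := fun j =>
    gk_adj_d i s (by simp) (by simp [HpAdj])
  have agf : ∀ j, (Gk k).Adj (.hp i s .g) (.hp i s (.f j)) := fun j =>
    gk_adj_d i s (by simp) (by simp [HpAdj])
  refine c_label k _ (L (.hp i s .e)) _ (L (.hp i s .g)) (L (.hp i s .h)) (L (.hp i s .i)) hk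
    (fun j => L (.hp i s (.f j))) ?_ (fun j => hb _) (hb _) (hb _) (hb _) (hb _) (hb _) (hb _)
    (hd _ _ _ adc ade (by simp)) (hd _ _ _ agh agi (by simp))
    (hd _ _ _ (adf ⟨0, by omega⟩).symm (agf ⟨0, by omega⟩).symm (by simp))
    (fun j => hd _ _ _ (adf j) adc (by simp)) (fun j => hd _ _ _ (adf j) ade (by simp))
    (fun j => hd _ _ _ (agf j) agh (by simp)) (fun j => hd _ _ _ (agf j) agi (by simp))
    (fun j => ha _ _ (adf j)) (fun j => ha _ _ (agf j)) (ha _ _ adc) (ha _ _ ade)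
    (ha _ _ agh) (ha _ _ agi)
  intro j jt hjj
  by_contra hne
  exact hd _ _ _ (adf j) (adf jt) (by simpa using hne) hjj

theorem gk_forward (k : ℕ) (hk : 6 ≤ k) (L : GkV k → ℕ) (hL : IsL21Labelling (Gk k) k L) :
    ∃ B : Fin (k - 5) → ℕ, Function.Injective B ∧ (∀ i, 1 ≤ B i ∧ B i ≤ k - 1) ∧
      (∀ i, (B i + 2 ≤ L .au ∨ L .au + 2 ≤ B i) ∧ (B i + 2 ≤ L .av ∨ L .av + 2 ≤ B i) ∧
        (B i = 1 → L .au ≤ k - 2 ∧ L .av ≤ k - 2) ∧ (B i = k - 1 → 2 ≤ L .au ∧ 2 ≤ L .av)) := by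
  obtain ⟨hb, ha, hd⟩ := (l21_iff _ _ _).1 hL
  have aub : ∀ i, (Gk k).Adj .au (.b i) := fun i => by simp [Gk, GkAdj]
  have avb : ∀ i, (Gk k).Adj .av (.b i) := fun i => by simp [Gk, GkAdj]
  have abc : ∀ i s, (Gk k).Adj (.b i) (.hp i s .c) := fun i s => by simp [Gk, GkAdj]
  have acd : ∀ i s, (Gk k).Adj (.hp i s .c) (.hp i s .d) := fun i s =>
    gk_adj_d i s (by simp) (by simp [HpAdj])
  have key : ∀ i, (1 ≤ L (.b i) ∧ L (.b i) ≤ k - 1) ∧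
      (L (.b i) = 1 → L .au ≤ k - 2 ∧ L .av ≤ k - 2) ∧
      (L (.b i) = k - 1 → 2 ≤ L .au ∧ 2 ≤ L .av) := by
    intro i
    have c1 := gk_c_label k hk L hL i true
    have c2 := gk_c_label k hk L hL i false
    have d1 := hd _ _ _ (abc i true).symm (acd i true) (by simp)
    have d2 := hd _ _ _ (abc i false).symm (acd i false) (by simp)
    have s1 := ha _ _ (abc i true)
    have s2 := ha _ _ (abc i false)
    have cc := hd _ _ _ (abc i true) (abc i false) (by simp)
    have u1 := hd _ _ _ (abc i true) (aub i).symm (by simp)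
    have u2 := hd _ _ _ (abc i false) (aub i).symm (by simp)
    have v1 := hd _ _ _ (abc i true) (avb i).symm (by simp)
    have v2 := hd _ _ _ (abc i false) (avb i).symm (by simp)
    have b0 := hb (.b i)
    have b1 := hb .au
    have b2 := hb .av
    generalize L (.b i) = b at *
    generalize L (.hp i true .c) = c at *
    generalize L (.hp i false .c) = ct at *
    generalize L (.hp i true .d) = d at *
    generalize L (.hp i false .d) = dt at *
    generalize L .au = β at *
    generalize L .av = γ at *
    clear ha hd hb aub avb abc acd
    rcases c1 with ⟨rfl, rfl | rfl⟩ | ⟨rfl, rfl | rfl⟩ <;>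
      rcases c2 with ⟨rfl, rfl | rfl⟩ | ⟨rfl, rfl | rfl⟩ <;> omega
  refine ⟨fun i => L (.b i), ?_, fun i => (key i).1, fun i => ⟨(ha _ _ (aub i)).symm,
    (ha _ _ (avb i)).symm, (key i).2⟩⟩
  intro i j hij
  by_contra hne
  exact hd _ _ _ (aub i) (aub j) (by simpa using hne) hij

/-- Two values `β < γ` of the labels of `a_u, a_v` (in either order) compatible with the gadget. -/
theorem num (k : ℕ) (hk : 6 ≤ k) (β γ : ℕ) (hγ : γ ≤ k) (hlt : β + 2 ≤ γ)
    (B : Fin (k - 5) → ℕ) (hB : Function.Injective B) (hB1 : ∀ i, 1 ≤ B i ∧ B i ≤ k - 1)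
    (h : ∀ i, (B i + 2 ≤ β ∨ β + 2 ≤ B i) ∧ (B i + 2 ≤ γ ∨ γ + 2 ≤ B i) ∧
        (B i = 1 → β ≤ k - 2 ∧ γ ≤ k - 2) ∧ (B i = k - 1 → 2 ≤ β ∧ 2 ≤ γ)) :
    (β = 0 ∧ (γ = 2 ∨ γ = k - 2 ∨ γ ≥ k - 1)) ∨ (γ = k ∧ (β ≤ 1 ∨ β = 2 ∨ β = k - 2)) ∨
      (β = 1 ∧ γ = k - 1) := by
  by_contra hc
  have five := five_out k hk B hB hB1
  rcases Nat.lt_or_ge β 2 with hβ | hβ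
  · rcases (by omega : β = 0 ∨ β = 1) with rfl | rfl
    · refine five 1 (γ - 1) γ (γ + 1) (k - 1) ?_ ?_ ?_ ?_ ?_ ?_ fun i => ?_
      case refine_7 => have := h i; omega
      all_goals omega
    · rcases (by omega : γ = 3 ∨ 4 ≤ γ) with rfl | h4
      · refine five 1 2 3 4 (k - 1) ?_ ?_ ?_ ?_ ?_ ?_ fun i => ?_
        case refine_7 => have := h i; omega
        all_goals omega
      · refine five 1 2 (γ - 1) γ (γ + 1) ?_ ?_ ?_ ?_ ?_ ?_ fun i => ?_
        case refine_7 => have := h i; omega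
        all_goals omega
  · rcases (by omega : γ = k ∨ γ = k - 1 ∨ γ ≤ k - 2) with rfl | h1 | h1
    · refine five 1 (β - 1) β (β + 1) (γ - 1) ?_ ?_ ?_ ?_ ?_ ?_ fun i => ?_
      case refine_7 => have := h i; omega
      all_goals omega
    · rcases (by omega : β = k - 3 ∨ β < k - 3) with h3 | h3
      · refine five 1 (β - 1) β (β + 1) (k - 1) ?_ ?_ ?_ ?_ ?_ ?_ fun i => ?_
        case refine_7 => have := h i; omega
        all_goals omega
      · refine five (β - 1) β (β + 1) (k - 2) (k - 1) ?_ ?_ ?_ ?_ ?_ ?_ fun i => ?_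
        case refine_7 => have := h i; omega
        all_goals omega
    · refine five (β - 1) β (β + 1) γ (γ + 1) ?_ ?_ ?_ ?_ ?_ ?_ fun i => ?_
      case refine_7 => have := h i; omega
      all_goals omega

theorem gk_iff (k : ℕ) (hk : 4 ≤ k) (hk5 : k ≠ 5) (α β γ δ : ℕ)
    (hα : α = 0 ∨ α = k) (hδ : δ = 0 ∨ δ = k) (hβ : β ≤ k) (hγ : γ ≤ k) :
    (∃ L : GkV k → ℕ, IsL21Labelling (Gk k) k L ∧ L .u = α ∧ L .au = β ∧ L .av = γ ∧ L .v = δ) ↔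
    ((α = 0 ∧ δ = 0 → β = 2 ∧ γ = k ∨ β = k ∧ γ = 2 ∨ β = k - 2 ∧ γ = k ∨ β = k ∧ γ = k - 2) ∧
     (α = k ∧ δ = k → β = 2 ∧ γ = 0 ∨ β = 0 ∧ γ = 2 ∨ β = k - 2 ∧ γ = 0 ∨ β = 0 ∧ γ = k - 2) ∧
     (α = k ∧ δ = 0 → β = 1 ∧ γ = k - 1) ∧
     (α = 0 ∧ δ = k → β = k - 1 ∧ γ = 1)) := by
  constructor
  · rintro ⟨L, hL, hu, hau, hav, hv⟩
    obtain ⟨hb, ha, hd⟩ := (l21_iff _ _ _).1 hL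
    have e1 : (Gk k).Adj .u .au := by simp [Gk, GkAdj]
    have e2 : (Gk k).Adj .au .av := by simp [Gk, GkAdj]
    have e3 : (Gk k).Adj .av .v := by simp [Gk, GkAdj]
    have a1 := ha _ _ e1
    have a2 := ha _ _ e2
    have a3 := ha _ _ e3
    have d1 := hd _ _ _ e1.symm e2 (by simp)
    have d2 := hd _ _ _ e2.symm e3 (by simp)
    rcases (by omega : k = 4 ∨ 6 ≤ k) with rfl | hk6
    · rw [hu, hau, hav, hv] at *
      omega
    · obtain ⟨B, hB, hB1, h⟩ := gk_forward k hk6 L hL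
      rw [hau, hav] at h
      simp only [hu, hau, hav, hv] at a1 a2 a3 d1 d2
      rcases a2 with a2 | a2
      · have := num k hk6 β γ hγ a2 B hB hB1 h
        omega
      · have := num k hk6 γ β hβ a2 B hB hB1 (fun i => by have := h i; omega)
        omega
  · rintro ⟨h1, h2, h3, h4⟩
    rcases hα with hα | hα <;> rcases hδ with hδ | hδ
    · rcases h1 ⟨hα, hδ⟩ with ⟨hb, hc⟩ | ⟨hb, hc⟩ | ⟨hb, hc⟩ | ⟨hb, hc⟩
      · apply labk_ok k α β γ δ 4 0 1 <;> omega
      · apply labk_ok k α β γ δ 4 0 1 <;> omega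
      · apply labk_ok k α β γ δ 2 0 (k - 1) <;> omega
      · apply labk_ok k α β γ δ 2 0 (k - 1) <;> omega
    · obtain ⟨hb, hc⟩ := h4 ⟨hα, hδ⟩
      apply labk_ok k α β γ δ 3 0 k <;> omega
    · obtain ⟨hb, hc⟩ := h3 ⟨hα, hδ⟩
      apply labk_ok k α β γ δ 3 0 k <;> omega
    · rcases h2 ⟨hα, hδ⟩ with ⟨hb, hc⟩ | ⟨hb, hc⟩ | ⟨hb, hc⟩ | ⟨hb, hc⟩
      · apply labk_ok k α β γ δ 4 1 k <;> omega
      · apply labk_ok k α β γ δ 4 1 k <;> omega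
      · apply labk_ok k α β γ δ 2 (k - 1) k <;> omega
      · apply labk_ok k α β γ δ 2 (k - 1) k <;> omega

/-- For `k ≥ 4` and `α, β, γ, δ ∈ {0,…,k}` with `α, δ ∈ {0,k}`: there is a
`k`-L(2,1)-labelling `L` of `G_k` with `L u = α`, `L a_u = β`, `L a_v = γ`, `L v = δ`
if and only if:
if `(α,δ) = (0,0)` then `(β,γ) ∈ {(2,k),(k,2),(k-2,k),(k,k-2)}`;
if `(α,δ) = (k,k)` then `(β,γ) ∈ {(2,0),(0,2),(k-2,0),(0,k-2)}`;
if `(α,δ) = (k,0)` then `(β,γ) = (1,k-1)`;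
if `(α,δ) = (0,k)` then `(β,γ) = (k-1,1)`. -/
theorem stmt_13 (k : ℕ) (hk : 4 ≤ k) (α β γ δ : ℕ)
    (hα : α = 0 ∨ α = k) (hδ : δ = 0 ∨ δ = k) (hβ : β ≤ k) (hγ : γ ≤ k) :
    (∃ L : (gadget k).V → ℕ, IsL21Labelling (gadget k).G k L ∧
      L (gadget k).u = α ∧ L (gadget k).au = β ∧ L (gadget k).av = γ ∧
      L (gadget k).v = δ) ↔
    ((α = 0 ∧ δ = 0 → (β, γ) ∈ ({(2,k),(k,2),(k-2,k),(k,k-2)} : Set (ℕ × ℕ))) ∧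
     (α = k ∧ δ = k → (β, γ) ∈ ({(2,0),(0,2),(k-2,0),(0,k-2)} : Set (ℕ × ℕ))) ∧
     (α = k ∧ δ = 0 → (β, γ) = (1, k-1)) ∧
     (α = 0 ∧ δ = k → (β, γ) = (k-1, 1))) := by
  simp only [Set.mem_insert_iff, Set.mem_singleton_iff, Prod.mk.injEq]
  by_cases hk5 : k = 5
  · subst hk5
    exact g5_iff α β γ δ hα hδ hβ hγ
  · have hg : gadget k = ⟨GkV k, Gk k, GkV.u, GkV.au, GkV.av, GkV.v⟩ := if_neg hk5
    rw [hg]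
    exact gk_iff k hk hk5 α β γ δ hα hδ hβ hγ
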